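/- Let x* be a local minimizer of (NLP) at which MFCQ holds. Then for each direction d in the critical cone C(x*) there exists a Lagrange multiplier (λ,μ) ∈ Λ(x*) (depending on d) such that dᵀ∇²ₓₓL(x*,λ,μ)d ≥ 0. -/

import Mathlib

open scoped BigOperators Pointwise
open Matrix

attribute [local instance] Classical.propDecidable

noncomputable section

/-- The gradient vector of `φ` at `x` (the vector of partial derivatives). -/
def gradVec {n : ℕ} (φ : (Fin n → ℝ) → ℝ) (x : Fin n → ℝ) : Fin n → ℝ :=
  fun k => fderiv ℝ φ x (Pi.single k 1)

/-- The quadratic form `d ↦ dᵀ ∇²φ(x) d` of the Hessian of `φ` at `x`. -/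
def hessQ {n : ℕ} (φ : (Fin n → ℝ) → ℝ) (x d : Fin n → ℝ) : ℝ :=
  iteratedFDeriv ℝ 2 φ x ![d, d]

/-- Feasibility for the problem (NLP). -/
def Feas {n m p : ℕ} (h : Fin m → (Fin n → ℝ) → ℝ) (g : Fin p → (Fin n → ℝ) → ℝ)
    (x : Fin n → ℝ) : Prop :=
  (∀ i, h i x = 0) ∧ ∀ j, g j x ≤ 0

/-- The Lagrangian of (NLP). -/
def Lagr {n m p : ℕ} (f : (Fin n → ℝ) → ℝ) (h : Fin m → (Fin n → ℝ) → ℝ)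
    (g : Fin p → (Fin n → ℝ) → ℝ) (lam : Fin m → ℝ) (mu : Fin p → ℝ) (x : Fin n → ℝ) : ℝ :=
  f x + ∑ i, lam i * h i x + ∑ j, mu j * g j x

/-- `(lam, mu)` is a Lagrange multiplier at `xs`, i.e. `(lam, mu) ∈ Λ(xs)`. -/
def IsLagMult {n m p : ℕ} (f : (Fin n → ℝ) → ℝ) (h : Fin m → (Fin n → ℝ) → ℝ)
    (g : Fin p → (Fin n → ℝ) → ℝ) (xs : Fin n → ℝ) (lam : Fin m → ℝ) (mu : Fin p → ℝ) : Prop :=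
  (∀ j, 0 ≤ mu j) ∧ fderiv ℝ (Lagr f h g lam mu) xs = 0 ∧ ∀ j, mu j * g j xs = 0

/-- The Mangasarian-Fromovitz constraint qualification at `xs`. -/
def MFCQ {n m p : ℕ} (h : Fin m → (Fin n → ℝ) → ℝ) (g : Fin p → (Fin n → ℝ) → ℝ)
    (xs : Fin n → ℝ) : Prop :=
  LinearIndependent ℝ (fun i : Fin m => fderiv ℝ (h i) xs) ∧
  ∃ d : Fin n → ℝ, (∀ i, fderiv ℝ (h i) xs d = 0) ∧
    ∀ j, g j xs = 0 → fderiv ℝ (g j) xs d < 0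

/-- Membership in the critical cone `C(xs)`. -/
def critCone {n m p : ℕ} (f : (Fin n → ℝ) → ℝ) (h : Fin m → (Fin n → ℝ) → ℝ)
    (g : Fin p → (Fin n → ℝ) → ℝ) (xs d : Fin n → ℝ) : Prop :=
  fderiv ℝ f xs d = 0 ∧ (∀ i, fderiv ℝ (h i) xs d = 0) ∧
    ∀ j, g j xs = 0 → fderiv ℝ (g j) xs d ≤ 0

/-- Membership in the critical subspace `S(xs)`. -/
def critSub {n m p : ℕ} (h : Fin m → (Fin n → ℝ) → ℝ) (g : Fin p → (Fin n → ℝ) → ℝ)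
    (xs d : Fin n → ℝ) : Prop :=
  (∀ i, fderiv ℝ (h i) xs d = 0) ∧ ∀ j, g j xs = 0 → fderiv ℝ (g j) xs d = 0

/-- The Jacobian matrix `J(x)` of equality and active inequality constraints
(activity taken at the base point `xs`). -/
def Jac {n m p : ℕ} (h : Fin m → (Fin n → ℝ) → ℝ) (g : Fin p → (Fin n → ℝ) → ℝ)
    (xs x : Fin n → ℝ) : Matrix (Fin m ⊕ {j : Fin p // g j xs = 0}) (Fin n) ℝ :=
  Matrix.of fun i k =>
    Sum.elim (fun i' => fderiv ℝ (h i') x (Pi.single k 1))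
      (fun j' => fderiv ℝ (g j'.1) x (Pi.single k 1)) i

/-- A first-order cone: the (direct) sum of a linear subspace and a ray. -/
def IsFirstOrderCone {n : ℕ} (K : Set (Fin n → ℝ)) : Prop :=
  ∃ (W : Submodule ℝ (Fin n → ℝ)) (d0 : Fin n → ℝ),
    K = {x | ∃ w ∈ W, ∃ r : ℝ, 0 ≤ r ∧ x = w + r • d0}

/-- The rank of a family of vectors: the dimension of its linear span. -/
def famRank {ι : Type*} {n : ℕ} (v : ι → (Fin n → ℝ)) : ℕ :=
  Module.finrank ℝ (Submodule.span ℝ (Set.range v))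

open Filter Topology Asymptotics

/-! The idea: if `x + t d + t² w / 2` satisfies the equality constraints to second order, metric
regularity corrects it by `o(t²)` into an arc satisfying them exactly. Along such an arc a function
whose first-order term at `x` is zero is governed by `φ'(x) w + φ''(x)(d, d)`. Hence at a minimizer
no `w` makes `φ'(x) w + φ''(x)(d, d)` zero for all equality constraints and negative for those among
the objective and the active inequality constraints whose first-order term is zero. As this is a
system of affine conditions on `w`, Motzkin's alternative provides multipliers of Fritz John type
valid for the first- and the second-order terms at once, and MFCQ forces the multiplier of the
objective to be positive, so that it can be normalized to `1`. -/

section Expansion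

variable {E F : Type*} [NormedAddCommGroup E] [NormedSpace ℝ E]
  [NormedAddCommGroup F] [NormedSpace ℝ F]

/-- The arc `X` has the one-sided expansion `X t = x + t d + t² w / 2 + o(t²)` as `t ↓ 0`. Here `w`
is an acceleration, so the quadratic term carries the factor `1 / 2`. -/
def HasParabolicExpansion (X : ℝ → E) (x d w : E) : Prop :=
  (fun t => X t - (x + t • d + (t ^ 2 / 2) • w)) =o[𝓝[>] 0] fun t => t ^ 2

/-- The parabolic second-order derivative `φ'(x) w + φ''(x)(d, d)` of `φ` at `x`: the acceleration
at `t = 0` of the image under `φ` of an arc `x + t d + t² w / 2 + o(t²)`. -/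
def parabolicDeriv (φ : E → F) (x d w : E) : F :=
  fderiv ℝ φ x w + iteratedFDeriv ℝ 2 φ x ![d, d]

theorem hasParabolicExpansion_of_eventually_hasDerivAt {X X' : ℝ → E} {w : E}
    (hX : ∀ᶠ t in 𝓝 0, HasDerivAt X (X' t) t) (hX' : HasDerivAt X' w 0) :
    HasParabolicExpansion X (X 0) (X' 0) w := by
  obtain ⟨ε, hε, hball⟩ := Metric.eventually_nhds_iff_ball.1 hX
  let R : ℝ → E := fun t => X t - (X 0 + t • X' 0 + (t ^ 2 / 2) • w)
  have hR : ∀ t ∈ Metric.ball (0 : ℝ) ε,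
      HasDerivWithinAt R (X' t - X' 0 - t • w) (Metric.ball 0 ε) t := by
    intro t ht
    have hlin := ((hasDerivAt_id t).smul_const (X' 0)).const_add (X 0)
    have hquad := (((hasDerivAt_id t).pow 2).div_const 2).smul_const w
    refine (((hball t ht).sub (hlin.add hquad)).congr_deriv ?_).hasDerivWithinAt
    simp [sub_sub]
  have hR' : (fun t => X' t - X' 0 - t • w) =o[𝓝[Metric.ball 0 ε] 0] fun t => (t - 0) ^ 1 := by
    simpa using hX'.isLittleO.mono nhdsWithin_le_nhds
  have hmain := (convex_ball (0 : ℝ) ε).isLittleO_pow_succ_real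
    (Metric.mem_ball_self hε) hR hR'
  rw [nhdsWithin_eq_nhds.2 (Metric.ball_mem_nhds 0 hε)] at hmain
  simpa [HasParabolicExpansion, R] using hmain.mono nhdsWithin_le_nhds

namespace HasParabolicExpansion

variable {X Y : ℝ → E} {x d w : E}

theorem parabola (x d w : E) :
    HasParabolicExpansion (fun t => x + t • d + (t ^ 2 / 2) • w) x d w := by
  simp [HasParabolicExpansion]

theorem of_sub_isLittleO (hX : HasParabolicExpansion X x d w)
    (hYX : (fun t => Y t - X t) =o[𝓝[>] 0] fun t : ℝ => t ^ 2) :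
    HasParabolicExpansion Y x d w :=
  (hYX.add hX).congr_left fun _ => sub_add_sub_cancel _ _ _

theorem tendsto (hX : HasParabolicExpansion X x d w) : Tendsto X (𝓝[>] 0) (𝓝 x) := by
  have hlim : Tendsto (fun t : ℝ => x + t • d + (t ^ 2 / 2) • w) (𝓝[>] 0) (𝓝 x) := by
    refine (Continuous.tendsto' ?_ 0 x (by simp)).mono_left nhdsWithin_le_nhds
    fun_prop
  have hsq : Tendsto (fun t : ℝ => t ^ 2) (𝓝[>] 0) (𝓝 0) :=
    ((continuous_pow 2).tendsto' 0 0 (by simp)).mono_left nhdsWithin_le_nhds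
  simpa using (hX.trans_tendsto hsq).add hlim

theorem comp {φ : E → F} (hX : HasParabolicExpansion X x d w) (hφ : ContDiffAt ℝ 2 φ x) :
    HasParabolicExpansion (φ ∘ X) (φ x) (fderiv ℝ φ x d) (parabolicDeriv φ x d w) := by
  let Y : ℝ → E := fun t => x + t • d + (t ^ 2 / 2) • w
  have hY0 : Y 0 = x := by simp [Y]
  have hYderiv : ∀ t, HasDerivAt Y (d + t • w) t := by
    intro t
    have hlin := ((hasDerivAt_id t).smul_const d).const_add x
    have hquad := (((hasDerivAt_id t).pow 2).div_const 2).smul_const w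
    exact (hlin.add hquad).congr_deriv (by simp)
  have hφY : ∀ᶠ t in 𝓝 0, HasDerivAt (φ ∘ Y) (fderiv ℝ φ (Y t) (d + t • w)) t := by
    have hdiff : ∀ᶠ y in 𝓝 (Y 0), DifferentiableAt ℝ φ y := by
      rw [hY0]
      exact (hφ.eventually (by simp)).mono fun y hy => hy.differentiableAt (by simp)
    filter_upwards [(hYderiv 0).continuousAt.eventually hdiff] with t ht
    exact ht.hasFDerivAt.comp_hasDerivAt t (hYderiv t)
  have hφY' : HasDerivAt (fun t => fderiv ℝ φ (Y t) (d + t • w)) (parabolicDeriv φ x d w) 0 := by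
    have hfderiv : HasFDerivAt (fderiv ℝ φ) (fderiv ℝ (fderiv ℝ φ) x) (Y 0) := by
      rw [hY0]
      exact ((hφ.fderiv_right (m := 1) le_rfl).differentiableAt (by simp)).hasFDerivAt
    have hdir : HasDerivAt (fun t : ℝ => d + t • w) w 0 := by
      simpa using ((hasDerivAt_id (0 : ℝ)).smul_const w).const_add d
    refine ((hfderiv.comp_hasDerivAt 0 (hYderiv 0)).clm_apply hdir).congr_deriv ?_
    simp [parabolicDeriv, iteratedFDeriv_two_apply, hY0, add_comm]
  have hexp : HasParabolicExpansion (φ ∘ Y) (φ x) (fderiv ℝ φ x d) (parabolicDeriv φ x d w) := by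
    simpa [hY0] using hasParabolicExpansion_of_eventually_hasDerivAt hφY hφY'
  have hlip : (fun t => φ (X t) - φ (Y t)) =O[𝓝[>] 0] fun t => X t - Y t :=
    (hφ.hasStrictFDerivAt (by simp)).isBigO_sub.comp_tendsto
      (hX.tendsto.prodMk_nhds (parabola x d w).tendsto)
  exact hexp.of_sub_isLittleO (hlip.trans_isLittleO hX)

theorem eventually_lt {X : ℝ → ℝ} {x d w : ℝ} (hX : HasParabolicExpansion X x d w)
    (hdw : d < 0 ∨ d = 0 ∧ w < 0) : ∀ᶠ t in 𝓝[>] 0, X t < x := by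
  obtain ⟨δ, hδ, hneg⟩ : ∃ δ > 0, ∀ᶠ t : ℝ in 𝓝[>] 0, t * d + t ^ 2 / 2 * w + δ * t ^ 2 < 0 := by
    rcases hdw with hd | ⟨rfl, hw⟩
    · have hlim : Tendsto (fun t : ℝ => d + t / 2 * w + t) (𝓝[>] 0) (𝓝 d) :=
        (Continuous.tendsto' (by fun_prop) 0 d (by simp)).mono_left nhdsWithin_le_nhds
      refine ⟨1, one_pos, ?_⟩
      filter_upwards [hlim.eventually_lt_const hd, self_mem_nhdsWithin] with t ht ht0
      linear_combination mul_neg_of_pos_of_neg ht0 ht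
    · refine ⟨-w / 4, by linarith, ?_⟩
      filter_upwards [self_mem_nhdsWithin] with t ht0
      linear_combination mul_neg_of_pos_of_neg (pow_pos ht0 2) hw / 4
  filter_upwards [hX.def hδ, hneg] with t hrem ht
  rw [Real.norm_of_nonneg (sq_nonneg t)] at hrem
  simp only [smul_eq_mul] at hrem
  linarith [le_abs_self (X t - (x + t * d + t ^ 2 / 2 * w)), Real.norm_eq_abs
    (X t - (x + t * d + t ^ 2 / 2 * w))]

end HasParabolicExpansion

end Expansion

section MetricRegularity

variable {E F : Type*} [NormedAddCommGroup E] [NormedSpace ℝ E] [CompleteSpace E]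
  [NormedAddCommGroup F] [NormedSpace ℝ F] [CompleteSpace F]

theorem exists_metricRegularity_bound {H : E → F} {H' : E →L[ℝ] F} {a : E}
    (hH : HasStrictFDerivAt H H' a) (hsurj : H'.range = ⊤) :
    ∃ K : ℝ, ∀ᶠ p : E × F in 𝓝 (a, H a),
      ∃ x, H x = p.2 ∧ ‖x - p.1‖ ≤ K * ‖p.2 - H p.1‖ := by
  let N := H'.nonlinearRightInverseOfSurjective hsurj
  have hN : 0 < N.nnnorm := H'.nonlinearRightInverseOfSurjective_nnnorm_pos hsurj
  obtain ⟨s, hs, happrox⟩ :=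
    hH.approximates_deriv_on_nhds (c := N.nnnorm⁻¹ / 2) (Or.inr (by positivity))
  obtain ⟨δ, hδ, hball⟩ := Metric.mem_nhds_iff.1 hs
  let r : E × F → ℝ := fun p => 2 * N.nnnorm * ‖p.2 - H p.1‖
  have hsmall : ∀ᶠ p in 𝓝 (a, H a), r p + dist p.1 a < δ := by
    have hcont : ContinuousAt (fun p => r p + dist p.1 a) (a, H a) := by
      have hHfst : ContinuousAt (fun p : E × F => H p.1) (a, H a) :=
        ContinuousAt.comp (f := Prod.fst) hH.continuousAt continuousAt_fst
      exact ((continuousAt_snd.sub hHfst).norm.const_mul _).add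
        (continuousAt_fst.dist continuousAt_const)
    exact hcont.eventually_lt continuousAt_const (by simpa [r] using hδ)
  refine ⟨2 * N.nnnorm, hsmall.mono fun p hp => ?_⟩
  have hsub : Metric.closedBall p.1 (r p) ⊆ s :=
    (Metric.closedBall_subset_ball' hp).trans hball
  have hmem : p.2 ∈ Metric.closedBall (H p.1)
      (((N.nnnorm : ℝ)⁻¹ - (N.nnnorm⁻¹ / 2 : NNReal)) * r p) := by
    rw [mem_closedBall_iff_norm]
    refine le_of_eq ?_
    have : (N.nnnorm : ℝ) ≠ 0 := by exact_mod_cast hN.ne'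
    push_cast
    field_simp [r]
    ring
  obtain ⟨x, hx, hHx⟩ :=
    happrox.surjOn_closedBall_of_nonlinearRightInverse N (by positivity) hsub hmem
  exact ⟨x, hHx, mem_closedBall_iff_norm.1 hx⟩

theorem HasParabolicExpansion.exists_eventually_eq {H : E → F} {H' : E →L[ℝ] F} {X : ℝ → E}
    {x d w : E} (hX : HasParabolicExpansion X x d w) (hH : HasStrictFDerivAt H H' x)
    (hsurj : H'.range = ⊤) (hHX : HasParabolicExpansion (H ∘ X) (H x) 0 0) :
    ∃ Y, HasParabolicExpansion Y x d w ∧ ∀ᶠ t in 𝓝[>] 0, H (Y t) = H x := by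
  obtain ⟨K, hK⟩ := exists_metricRegularity_bound hH hsurj
  have hcorr : ∀ᶠ t in 𝓝[>] 0, ∃ y, H y = H x ∧ ‖y - X t‖ ≤ K * ‖H x - H (X t)‖ :=
    (hX.tendsto.prodMk_nhds tendsto_const_nhds).eventually hK
  obtain ⟨Y, hY⟩ := hcorr.choice
  have hHX' : (fun t => H x - H (X t)) =o[𝓝[>] 0] fun t : ℝ => t ^ 2 := by
    simpa [HasParabolicExpansion] using hHX.neg_left
  have hYX : (fun t => Y t - X t) =o[𝓝[>] 0] fun t : ℝ => t ^ 2 :=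
    (IsBigO.of_bound K (hY.mono fun _ ht => ht.2)).trans_isLittleO hHX'
  exact ⟨Y, hX.of_sub_isLittleO hYX, hY.mono fun _ ht => ht.1⟩

end MetricRegularity

section Alternative

theorem dual_apply_eq_sum_mul {R κ : Type*} [Fintype κ] [CommSemiring R]
    (ψ : Module.Dual R (κ → R)) (y : κ → R) :
    ψ y = ∑ k, ψ (Pi.single k 1) * y k := by
  conv_lhs => rw [pi_eq_sum_univ' y]
  simp [mul_comm]

theorem range_pi_eq_top_of_linearIndependent {ι 𝕜 V : Type*} [Finite ι] [Field 𝕜] [AddCommGroup V]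
    [Module 𝕜 V] {L : ι → Module.Dual 𝕜 V} (hL : LinearIndependent 𝕜 L) :
    (LinearMap.pi L).range = ⊤ := by
  have := Fintype.ofFinite ι
  rw [LinearMap.range_eq_top, ← LinearMap.dualMap_injective_iff, injective_iff_map_eq_zero]
  intro ψ hψ
  have hcomb : ∑ i, ψ (Pi.single i 1) • L i = 0 := by
    ext v
    have hv : ψ (fun i => L i v) = 0 := LinearMap.congr_fun hψ v
    rw [dual_apply_eq_sum_mul] at hv
    simpa using hv
  ext i
  simpa using Fintype.linearIndependent_iff.1 hL _ hcomb i

variable {ι κ V : Type*} [Fintype κ] [AddCommGroup V] [Module ℝ V]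

theorem apply_nonpos_of_forall_apply_lt {κ : Type*} {S : Set κ} {ψ : Module.Dual ℝ (κ → ℝ)}
    {u : ℝ} {v : κ → ℝ} (hψ : ∀ y ∈ S.pi fun _ => Set.Iio 0, ψ y < u) (hv : ∀ k ∈ S, v k ≤ 0) :
    ψ v ≤ 0 := by
  by_contra! hpos
  let s : ℝ := (u - ψ fun _ => -1) / ψ v
  have hbase : ψ (fun _ => -1) < u := hψ _ fun _ _ => Set.mem_Iio.2 neg_one_lt_zero
  have hs : 0 ≤ s := div_nonneg (sub_nonneg.2 hbase.le) hpos.le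
  have hlt := hψ ((fun _ => -1) + s • v) fun k hk =>
    add_neg_of_neg_of_nonpos neg_one_lt_zero (mul_nonpos_of_nonneg_of_nonpos hs (hv k hk))
  simp [s, div_mul_cancel₀ _ hpos.ne'] at hlt

theorem exists_nonneg_multiplier_of_convex {C : Set (κ → ℝ)} (hC : Convex ℝ C)
    (hne : C.Nonempty) {S : Set κ} (hS : ∀ y ∈ C, ∃ k ∈ S, 0 ≤ y k) :
    ∃ mu : κ → ℝ, 0 ≤ mu ∧ mu ≠ 0 ∧ (∀ k ∉ S, mu k = 0) ∧ ∀ y ∈ C, 0 ≤ ∑ k, mu k * y k := by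
  let N : Set (κ → ℝ) := S.pi fun _ => Set.Iio 0
  have hdisj : Disjoint N C := Set.disjoint_left.2 fun y hyN hyC =>
    let ⟨k, hk, hyk⟩ := hS y hyC
    (hyN k hk).not_ge hyk
  obtain ⟨ψ, u, hψN, hψC⟩ := geometric_hahn_banach_open (convex_pi fun _ _ => convex_Iio 0)
    (isOpen_set_pi S.toFinite fun _ _ => isOpen_Iio) hC hdisj
  have hneg : ∀ t : ℝ, 0 < t → (fun _ => -t) ∈ N := fun t ht _ _ => neg_lt_zero.2 ht
  have hu : 0 ≤ u := by
    have hlim : Tendsto (fun t : ℝ => ψ fun _ => -t) (𝓝[>] 0) (𝓝 0) :=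
      (Continuous.tendsto' (by fun_prop) 0 0 (by simp [← Pi.zero_def])).mono_left nhdsWithin_le_nhds
    refine le_of_tendsto hlim ?_
    filter_upwards [self_mem_nhdsWithin] with t ht
    exact (hψN _ (hneg t ht)).le
  have hrec : ∀ v : κ → ℝ, (∀ k ∈ S, v k ≤ 0) → ψ v ≤ 0 := fun _ =>
    apply_nonpos_of_forall_apply_lt (ψ := ψ.toLinearMap) hψN
  have hsum := dual_apply_eq_sum_mul ψ.toLinearMap
  have hle : ∀ k, 0 ≤ ψ (Pi.single k 1) := fun k => by
    have := hrec (-Pi.single k 1) fun j _ =>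
      neg_nonpos.2 ((Pi.single_nonneg.2 zero_le_one : (0 : κ → ℝ) ≤ Pi.single k 1) j)
    rwa [map_neg, neg_nonpos] at this
  refine ⟨fun k => ψ (Pi.single k 1), hle, fun h0 => ?_, fun k hk => ?_, fun y hy => ?_⟩
  · obtain ⟨y, hy⟩ := hne
    have hψ0 : ∀ z, ψ z = 0 := fun z =>
      (hsum z).trans (Finset.sum_eq_zero fun k _ => by simp [congrFun h0 k])
    linarith [hψN _ (hneg 1 one_pos), hψC y hy, hψ0 y, hψ0 fun _ => -1]
  · refine (hrec _ fun j hj => ?_).antisymm (hle k)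
    rw [Pi.single_eq_of_ne (ne_of_mem_of_not_mem hj hk)]
  · exact (hu.trans (hψC y hy)).trans_eq (hsum y)

variable [Fintype ι] {L : ι → Module.Dual ℝ V} {b : ι → ℝ}

theorem exists_multipliers_of_affine_nonneg {l : Module.Dual ℝ V} {c : ℝ}
    (hL : ∃ w, ∀ i, L i w + b i = 0) (hl : ∀ w, (∀ i, L i w + b i = 0) → 0 ≤ l w + c) :
    ∃ lam : ι → ℝ, ∑ i, lam i • L i + l = 0 ∧ 0 ≤ ∑ i, lam i * b i + c := by
  obtain ⟨w, hw⟩ := hL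
  have hker : ⨅ i, (L i).ker ≤ l.ker := by
    intro v hv
    simp only [Submodule.mem_iInf, LinearMap.mem_ker] at hv ⊢
    by_contra hlv
    have := hl (w + (-(l w + c + 1) / l v) • v) fun i => by simp [hv i, hw i]
    rw [map_add, map_smul, smul_eq_mul, div_mul_cancel₀ _ hlv] at this
    linarith
  obtain ⟨a, ha⟩ := (Submodule.mem_span_range_iff_exists_fun ℝ).1 (mem_span_of_iInf_ker_le_ker hker)
  refine ⟨-a, by simp [← ha, ← Finset.sum_add_distrib, ← add_smul], ?_⟩
  have hlw : ∑ i, -a i * b i = l w := by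
    rw [← ha, LinearMap.sum_apply]
    refine Finset.sum_congr rfl fun i _ => ?_
    rw [LinearMap.smul_apply, smul_eq_mul]
    linear_combination -a i * hw i
  simpa only [Pi.neg_apply, hlw] using hl w hw

theorem exists_multipliers_of_not_exists_affine_neg {l : κ → Module.Dual ℝ V} {c : κ → ℝ}
    {S : Set κ} (hL : ∃ w, ∀ i, L i w + b i = 0)
    (hno : ¬∃ w, (∀ i, L i w + b i = 0) ∧ ∀ k ∈ S, l k w + c k < 0) :
    ∃ (lam : ι → ℝ) (mu : κ → ℝ), 0 ≤ mu ∧ mu ≠ 0 ∧ (∀ k ∉ S, mu k = 0) ∧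
      ∑ i, lam i • L i + ∑ k, mu k • l k = 0 ∧
      0 ≤ ∑ i, lam i * b i + ∑ k, mu k * c k := by
  let W : Set V := {w | ∀ i, L i w + b i = 0}
  have hconv : Convex ℝ ((fun w k => l k w + c k) '' W) := by
    rintro _ ⟨w, hw, rfl⟩ _ ⟨w', hw', rfl⟩ p q - - hpq
    refine ⟨p • w + q • w', fun i => ?_, funext fun k => ?_⟩
    · simp only [map_add, map_smul, smul_eq_mul]
      linear_combination p * hw i + q * hw' i - b i * hpq
    · simp only [map_add, map_smul, smul_eq_mul, Pi.add_apply, Pi.smul_apply]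
      linear_combination -c k * hpq
  obtain ⟨mu, hmu, hmu0, hsupp, hnonneg⟩ := exists_nonneg_multiplier_of_convex hconv
    (Set.Nonempty.image _ hL) (S := S) (by
      rintro _ ⟨w, hw, rfl⟩
      by_contra! hneg
      exact hno ⟨w, hw, hneg⟩)
  obtain ⟨lam, hlam, hlam'⟩ := exists_multipliers_of_affine_nonneg (l := ∑ k, mu k • l k)
    (c := ∑ k, mu k * c k) hL fun w hw => by
      simpa [mul_add, Finset.sum_add_distrib] using hnonneg _ ⟨w, hw, rfl⟩
  exact ⟨lam, mu, hmu, hmu0, hsupp, hlam, hlam'⟩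

end Alternative

section FritzJohn

variable {ι κ E : Type*} [NormedAddCommGroup E] [NormedSpace ℝ E]
  {h : ι → E → ℝ} {φ : κ → E → ℝ} {x d w : E} {A : Set κ}

theorem range_pi_fderiv_eq_top [Finite ι] (hli : LinearIndependent ℝ fun i => fderiv ℝ (h i) x) :
    (ContinuousLinearMap.pi fun i => fderiv ℝ (h i) x).range = ⊤ :=
  range_pi_eq_top_of_linearIndependent
    (hli.map' (ContinuousLinearMap.coeLM ℝ)
      (LinearMap.ker_eq_bot.2 ContinuousLinearMap.coe_injective))

variable [CompleteSpace E]

theorem frequently_forall_lt_of_parabolicDeriv_neg [Finite ι] [Finite κ]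
    (hh : ∀ i, ContDiffAt ℝ 2 (h i) x) (hφ : ∀ k ∈ A, ContDiffAt ℝ 2 (φ k) x)
    (hli : LinearIndependent ℝ fun i => fderiv ℝ (h i) x) (hd : ∀ i, fderiv ℝ (h i) x d = 0)
    (hw : ∀ i, parabolicDeriv (h i) x d w = 0)
    (hneg : ∀ k ∈ A, fderiv ℝ (φ k) x d < 0 ∨
      fderiv ℝ (φ k) x d = 0 ∧ parabolicDeriv (φ k) x d w < 0) :
    ∃ᶠ y in 𝓝 x, (∀ i, h i y = h i x) ∧ ∀ k ∈ A, φ k y < φ k x := by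
  have := Fintype.ofFinite ι
  let H : E → ι → ℝ := fun y i => h i y
  have hH : HasStrictFDerivAt H (ContinuousLinearMap.pi fun i => fderiv ℝ (h i) x) x :=
    hasStrictFDerivAt_pi.2 fun i => (hh i).hasStrictFDerivAt (by simp)
  have hparabola := HasParabolicExpansion.parabola x d w
  have hHparabola : HasParabolicExpansion (H ∘ _) (H x) 0 0 :=
    isLittleO_pi.2 fun i => by
      simpa [HasParabolicExpansion, hd i, hw i] using hparabola.comp (hh i)
  obtain ⟨Y, hY, hHY⟩ := hparabola.exists_eventually_eq hH (range_pi_fderiv_eq_top hli) hHparabola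
  have hdecr : ∀ᶠ t in 𝓝[>] 0, ∀ k ∈ A, φ k (Y t) < φ k x :=
    (eventually_all_finite A.toFinite).2 fun k hk => (hY.comp (hφ k hk)).eventually_lt (hneg k hk)
  refine hY.tendsto.frequently (Eventually.frequently ?_)
  filter_upwards [hHY, hdecr] with t hHt hφt
  exact ⟨congrFun hHt, hφt⟩

theorem exists_secondOrder_fritzJohn_multipliers [Fintype ι] [Fintype κ]
    (hh : ∀ i, ContDiffAt ℝ 2 (h i) x) (hφ : ∀ k ∈ A, ContDiffAt ℝ 2 (φ k) x)
    (hli : LinearIndependent ℝ fun i => fderiv ℝ (h i) x)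
    (hmin : ∀ᶠ y in 𝓝 x, (∀ i, h i y = h i x) → ∃ k ∈ A, φ k x ≤ φ k y)
    (hd : ∀ i, fderiv ℝ (h i) x d = 0) (hφd : ∀ k ∈ A, fderiv ℝ (φ k) x d ≤ 0) :
    ∃ (lam : ι → ℝ) (mu : κ → ℝ), 0 ≤ mu ∧ mu ≠ 0 ∧ (∀ k ∉ A, mu k = 0) ∧
      ∑ i, lam i • fderiv ℝ (h i) x + ∑ k, mu k • fderiv ℝ (φ k) x = 0 ∧
      0 ≤ ∑ i, lam i * iteratedFDeriv ℝ 2 (h i) x ![d, d] +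
        ∑ k, mu k * iteratedFDeriv ℝ 2 (φ k) x ![d, d] := by
  have hsol : ∃ w, ∀ i, parabolicDeriv (h i) x d w = 0 := by
    obtain ⟨w, hw⟩ := LinearMap.range_eq_top.1 (range_pi_fderiv_eq_top hli)
      fun i => -iteratedFDeriv ℝ 2 (h i) x ![d, d]
    exact ⟨w, fun i => eq_neg_iff_add_eq_zero.1 (congrFun hw i)⟩
  have hno : ¬∃ w, (∀ i, parabolicDeriv (h i) x d w = 0) ∧
      ∀ k ∈ {k ∈ A | fderiv ℝ (φ k) x d = 0}, parabolicDeriv (φ k) x d w < 0 := by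
    rintro ⟨w, hw, hneg⟩
    obtain ⟨y, ⟨hhy, hφy⟩, hy⟩ := ((frequently_forall_lt_of_parabolicDeriv_neg hh hφ hli hd hw
      fun k hk => (hφd k hk).lt_or_eq.imp_right fun h0 => ⟨h0, hneg k ⟨hk, h0⟩⟩).and_eventually
        hmin).exists
    obtain ⟨k, hk, hle⟩ := hy hhy
    exact (hφy k hk).not_ge hle
  obtain ⟨lam, mu, hmu, hmu0, hsupp, hstat, hcurv⟩ := exists_multipliers_of_not_exists_affine_neg
    (L := fun i => (fderiv ℝ (h i) x).toLinearMap) (l := fun k => (fderiv ℝ (φ k) x).toLinearMap)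
    hsol hno
  refine ⟨lam, mu, hmu, hmu0, fun k hk => hsupp k fun hk' => hk hk'.1, ?_, hcurv⟩
  ext v
  simpa using LinearMap.congr_fun hstat v

end FritzJohn

section Lagrangian

variable {ι κ E : Type*} [Fintype ι] [Fintype κ] [NormedAddCommGroup E] [NormedSpace ℝ E]
  {f : E → ℝ} {h : ι → E → ℝ} {g : κ → E → ℝ} {lam : ι → ℝ} {mu : κ → ℝ} {x : E}

/-- The Lagrangian of the problem of minimizing `f` subject to `h i = 0` and `g j ≤ 0`, for finitely
many constraints on an arbitrary space; `Lagr` is the case of `ℝⁿ`. -/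
def lagrangian (f : E → ℝ) (h : ι → E → ℝ) (g : κ → E → ℝ) (lam : ι → ℝ) (mu : κ → ℝ)
    (x : E) : ℝ :=
  f x + ∑ i, lam i * h i x + ∑ j, mu j * g j x

theorem iteratedFDeriv_lagrangian {n : ℕ} (hf : ContDiffAt ℝ n f x)
    (hh : ∀ i, ContDiffAt ℝ n (h i) x) (hg : ∀ j, ContDiffAt ℝ n (g j) x) :
    iteratedFDeriv ℝ n (lagrangian f h g lam mu) x = iteratedFDeriv ℝ n f x +
      ∑ i, lam i • iteratedFDeriv ℝ n (h i) x + ∑ j, mu j • iteratedFDeriv ℝ n (g j) x := by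
  have hlh : ∀ i, ContDiffAt ℝ n (fun y => lam i • h i y) x := fun i => (hh i).const_smul _
  have hmg : ∀ j, ContDiffAt ℝ n (fun y => mu j • g j y) x := fun j => (hg j).const_smul _
  have hsmul : ∀ (a : ℝ) {ψ : E → ℝ}, ContDiffAt ℝ n ψ x →
      iteratedFDeriv ℝ n (fun y => a • ψ y) x = a • iteratedFDeriv ℝ n ψ x :=
    fun _ _ hψ => iteratedFDeriv_const_smul_apply' hψ
  unfold lagrangian
  simp only [← smul_eq_mul]
  rw [fun_iteratedFDeriv_add_apply (hf.add (.sum fun i _ => hlh i)) (.sum fun j _ => hmg j),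
    fun_iteratedFDeriv_add_apply hf (.sum fun i _ => hlh i),
    iteratedFDeriv_fun_sum_apply fun i _ => hlh i, iteratedFDeriv_fun_sum_apply fun j _ => hmg j]
  simp only [hsmul _ (hh _), hsmul _ (hg _)]

theorem fderiv_lagrangian (hf : DifferentiableAt ℝ f x) (hh : ∀ i, DifferentiableAt ℝ (h i) x)
    (hg : ∀ j, DifferentiableAt ℝ (g j) x) :
    fderiv ℝ (lagrangian f h g lam mu) x =
      fderiv ℝ f x + ∑ i, lam i • fderiv ℝ (h i) x + ∑ j, mu j • fderiv ℝ (g j) x :=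
  ((hf.hasFDerivAt.add (.fun_sum fun i _ => (hh i).hasFDerivAt.const_mul (lam i))).add
    (.fun_sum fun j _ => (hg j).hasFDerivAt.const_mul (mu j))).fderiv

end Lagrangian

theorem eventually_le_or_exists_nonneg_of_isLocalMinOn {ι κ E : Type*} [Finite κ]
    [TopologicalSpace E] {f : E → ℝ} {h : ι → E → ℝ} {g : κ → E → ℝ} {x : E}
    (hgc : ∀ j, ContinuousAt (g j) x) (hgx : ∀ j, g j x ≤ 0)
    (hmin : IsLocalMinOn f {y | (∀ i, h i y = 0) ∧ ∀ j, g j y ≤ 0} x) :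
    ∀ᶠ y in 𝓝 x, (∀ i, h i y = 0) → f x ≤ f y ∨ ∃ j, g j x = 0 ∧ 0 ≤ g j y := by
  have hinactive : ∀ᶠ y in 𝓝 x, ∀ j, g j x < 0 → g j y < 0 :=
    eventually_all.2 fun j => eventually_imp_distrib_left.2 (hgc j).eventually_lt_const
  filter_upwards [hinactive, eventually_nhdsWithin_iff.1 hmin] with y hy hmin_y hhy
  by_contra! hneg
  refine hneg.1.not_ge (hmin_y ⟨hhy, fun j => ?_⟩)
  exact ((hgx j).lt_or_eq.elim (hy j) (hneg.2 j)).le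

theorem exists_secondOrder_fritzJohn_multipliers_of_isLocalMinOn {ι κ E : Type*} [Fintype ι]
    [Fintype κ] [NormedAddCommGroup E] [NormedSpace ℝ E] [CompleteSpace E] {f : E → ℝ}
    {h : ι → E → ℝ} {g : κ → E → ℝ} {x d : E} (hf : ContDiffAt ℝ 2 f x)
    (hh : ∀ i, ContDiffAt ℝ 2 (h i) x) (hg : ∀ j, ContDiffAt ℝ 2 (g j) x)
    (hfeas : (∀ i, h i x = 0) ∧ ∀ j, g j x ≤ 0)
    (hmin : IsLocalMinOn f {y | (∀ i, h i y = 0) ∧ ∀ j, g j y ≤ 0} x)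
    (hli : LinearIndependent ℝ fun i => fderiv ℝ (h i) x)
    (hfd : fderiv ℝ f x d ≤ 0) (hhd : ∀ i, fderiv ℝ (h i) x d = 0)
    (hgd : ∀ j, g j x = 0 → fderiv ℝ (g j) x d ≤ 0) :
    ∃ (mu₀ : ℝ) (lam : ι → ℝ) (mu : κ → ℝ), 0 ≤ mu₀ ∧ 0 ≤ mu ∧ (mu₀ ≠ 0 ∨ mu ≠ 0) ∧
      (∀ j, mu j * g j x = 0) ∧
      mu₀ • fderiv ℝ f x + ∑ i, lam i • fderiv ℝ (h i) x + ∑ j, mu j • fderiv ℝ (g j) x = 0 ∧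
      0 ≤ mu₀ * iteratedFDeriv ℝ 2 f x ![d, d] + ∑ i, lam i * iteratedFDeriv ℝ 2 (h i) x ![d, d] +
        ∑ j, mu j * iteratedFDeriv ℝ 2 (g j) x ![d, d] := by
  let φ : Option κ → E → ℝ := fun k => k.elim f g
  let A : Set (Option κ) := {k | ∀ j ∈ k, g j x = 0}
  have hφmin : ∀ᶠ y in 𝓝 x, (∀ i, h i y = h i x) → ∃ k ∈ A, φ k x ≤ φ k y := by
    filter_upwards [eventually_le_or_exists_nonneg_of_isLocalMinOn
      (fun j => (hg j).continuousAt) hfeas.2 hmin] with y hy hhy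
    rcases hy fun i => (hhy i).trans (hfeas.1 i) with hle | ⟨j, hj, hle⟩
    · exact ⟨none, by simp [A], hle⟩
    · exact ⟨some j, by simpa [A] using hj, hj.trans_le hle⟩
  obtain ⟨lam, mu, hmu, hmu0, hsupp, hstat, hcurv⟩ :=
    exists_secondOrder_fritzJohn_multipliers (φ := φ) (A := A) hh
      (Option.forall.2 ⟨fun _ => hf, fun j _ => hg j⟩) hli hφmin hhd
      (Option.forall.2 ⟨fun _ => hfd, fun j hj => hgd j (hj j rfl)⟩)
  rw [Fintype.sum_option, ← add_assoc, add_comm (Finset.sum _ _)] at hstat hcurv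
  refine ⟨mu none, lam, fun j => mu (some j), hmu none, fun j => hmu (some j), ?_, fun j => ?_,
    hstat, hcurv⟩
  · by_contra! hzero
    exact hmu0 (funext (Option.forall.2 ⟨hzero.1, congrFun hzero.2⟩))
  · rw [mul_eq_zero, or_iff_not_imp_right]
    exact fun hj => hsupp _ fun hA => hj (hA j rfl)

theorem pos_of_mul_add_sum_mul_eq_zero {κ : Type*} [Fintype κ] {mu₀ r : ℝ} {mu a : κ → ℝ}
    (hmu₀ : 0 ≤ mu₀) (hmu : 0 ≤ mu) (hne : mu₀ ≠ 0 ∨ mu ≠ 0)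
    (hsum : mu₀ * r + ∑ j, mu j * a j = 0) (ha : ∀ j, mu j ≠ 0 → a j < 0) : 0 < mu₀ := by
  refine hmu₀.lt_of_ne' fun h0 => hne.resolve_left (not_not.2 h0) (funext fun j => ?_)
  have hterm : ∀ j, mu j ≠ 0 → mu j * a j < 0 := fun j hj =>
    mul_neg_of_pos_of_neg ((hmu j).lt_of_ne' hj) (ha j hj)
  have hnonpos : ∀ j ∈ Finset.univ, mu j * a j ≤ 0 := fun j _ => by
    by_cases hj : mu j = 0
    · rw [hj, zero_mul]
    · exact (hterm j hj).le
  rw [h0, zero_mul, zero_add, Finset.sum_eq_zero_iff_of_nonpos hnonpos] at hsum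
  exact not_imp_comm.1 (hterm j) (hsum j (Finset.mem_univ j)).not_lt

theorem add_sum_inv_mul_smul_add_sum_inv_mul_smul {ι κ 𝕜 M : Type*} [Fintype ι] [Fintype κ]
    [DivisionRing 𝕜] [AddCommMonoid M] [Module 𝕜 M] {a : 𝕜} (ha : a ≠ 0) (lam : ι → 𝕜) (mu : κ → 𝕜)
    (u : M) (v : ι → M) (w : κ → M) :
    u + ∑ i, (a⁻¹ * lam i) • v i + ∑ j, (a⁻¹ * mu j) • w j =
      a⁻¹ • (a • u + ∑ i, lam i • v i + ∑ j, mu j • w j) := by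
  simp only [smul_add, Finset.smul_sum, mul_smul, inv_smul_smul₀ ha]

theorem stmt0_general {ι κ E : Type*} [Fintype ι] [Fintype κ] [NormedAddCommGroup E]
    [NormedSpace ℝ E] [CompleteSpace E] {f : E → ℝ} {h : ι → E → ℝ} {g : κ → E → ℝ} {x d : E}
    (hf : ContDiffAt ℝ 2 f x) (hh : ∀ i, ContDiffAt ℝ 2 (h i) x)
    (hg : ∀ j, ContDiffAt ℝ 2 (g j) x) (hfeas : (∀ i, h i x = 0) ∧ ∀ j, g j x ≤ 0)
    (hmin : IsLocalMinOn f {y | (∀ i, h i y = 0) ∧ ∀ j, g j y ≤ 0} x)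
    (hmfcq : LinearIndependent ℝ (fun i => fderiv ℝ (h i) x) ∧
      ∃ v, (∀ i, fderiv ℝ (h i) x v = 0) ∧ ∀ j, g j x = 0 → fderiv ℝ (g j) x v < 0)
    (hfd : fderiv ℝ f x d ≤ 0) (hhd : ∀ i, fderiv ℝ (h i) x d = 0)
    (hgd : ∀ j, g j x = 0 → fderiv ℝ (g j) x d ≤ 0) :
    ∃ (lam : ι → ℝ) (mu : κ → ℝ), ((∀ j, 0 ≤ mu j) ∧
      fderiv ℝ (lagrangian f h g lam mu) x = 0 ∧ ∀ j, mu j * g j x = 0) ∧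
        0 ≤ iteratedFDeriv ℝ 2 (lagrangian f h g lam mu) x ![d, d] := by
  obtain ⟨hli, v, hhv, hgv⟩ := hmfcq
  obtain ⟨mu₀, lam, mu, hmu₀, hmu, hne, hcompl, hstat, hcurv⟩ :=
    exists_secondOrder_fritzJohn_multipliers_of_isLocalMinOn hf hh hg hfeas hmin hli hfd hhd hgd
  have hstat_v : mu₀ * fderiv ℝ f x v + ∑ j, mu j * fderiv ℝ (g j) x v = 0 := by
    simpa [hhv] using DFunLike.congr_fun hstat v
  have hpos : 0 < mu₀ := pos_of_mul_add_sum_mul_eq_zero hmu₀ hmu hne hstat_v fun j hj =>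
    hgv j ((mul_eq_zero.1 (hcompl j)).resolve_left hj)
  refine ⟨fun i => mu₀⁻¹ * lam i, fun j => mu₀⁻¹ * mu j,
    ⟨fun j => mul_nonneg (inv_nonneg.2 hmu₀) (hmu j), ?_, fun j => ?_⟩, ?_⟩
  · rw [fderiv_lagrangian (hf.differentiableAt (by simp))
      (fun i => (hh i).differentiableAt (by simp)) (fun j => (hg j).differentiableAt (by simp)),
      add_sum_inv_mul_smul_add_sum_inv_mul_smul hpos.ne', hstat, smul_zero]
  · rw [mul_assoc, hcompl j, mul_zero]
  · rw [iteratedFDeriv_lagrangian hf hh hg, add_sum_inv_mul_smul_add_sum_inv_mul_smul hpos.ne']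
    simpa [mul_add] using mul_nonneg (inv_nonneg.2 hmu₀) hcurv

/-- Under MFCQ, at a local minimizer, for each critical direction there is a
Lagrange multiplier (depending on the direction) making the Hessian quadratic form nonnegative. -/
theorem stmt0 {n m p : ℕ} (f : (Fin n → ℝ) → ℝ) (h : Fin m → (Fin n → ℝ) → ℝ)
    (g : Fin p → (Fin n → ℝ) → ℝ)
    (hf : ContDiff ℝ 2 f) (hh : ∀ i, ContDiff ℝ 2 (h i)) (hg : ∀ j, ContDiff ℝ 2 (g j))
    (xs : Fin n → ℝ) (hfeas : Feas h g xs)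
    (hmin : IsLocalMinOn f {x | Feas h g x} xs)
    (hmfcq : MFCQ h g xs) :
    ∀ d : Fin n → ℝ, critCone f h g xs d →
      ∃ (lam : Fin m → ℝ) (mu : Fin p → ℝ), IsLagMult f h g xs lam mu ∧
        0 ≤ hessQ (Lagr f h g lam mu) xs d :=
  fun _ ⟨hfd, hhd, hgd⟩ => stmt0_general hf.contDiffAt (fun i => (hh i).contDiffAt)
    (fun j => (hg j).contDiffAt) hfeas hmin hmfcq hfd.le hhd hgd
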